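/- Let ρ = Σ_{i=1}^K α_i ρ₁^{(i)}⊗⋯⊗ρ_N^{(i)} be a separable state on ℂ^{d₁}⊗⋯⊗ℂ^{d_N}, where α_i > 0, Σ_i α_i = 1, and each ρ_n^{(i)} is a state on ℂ^{d_n}. Then for all positive integers S₁,…,S_N ≥ 1, the operator Σ_{i=1}^K α_i (ρ₁^{(i)})^{⊗S₁}⊗⋯⊗(ρ_N^{(i)})^{⊗S_N} is a positive semidefinite S₁×⋯×S_N-setting source operator for ρ. -/

import Mathlib

open scoped ComplexOrder Matrix

namespace LqHV

/-- Entrywise tensor (Kronecker) product of a finite family of square complex matrices,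
realized on the pi-type index. -/
def tprod {ι : Type} [Fintype ι] [DecidableEq ι] {κ : ι → Type} [∀ i, Fintype (κ i)]
    (X : ∀ i, Matrix (κ i) (κ i) ℂ) : Matrix (∀ i, κ i) (∀ i, κ i) ℂ :=
  fun a b => ∏ i, X i (a i) (b i)

variable {N : ℕ}

/-- On the tensor product space `⊗_{n} (ℂ^{d n})^{⊗ S n}`, the operator acting as `X n` in
slot `k n` of site `n` and as the identity in all other slots. -/
def slot {d S : Fin N → ℕ} (X : ∀ n, Matrix (Fin (d n)) (Fin (d n)) ℂ) (k : ∀ n, Fin (S n)) :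
    ∀ p : Σ n : Fin N, Fin (S n), Matrix (Fin (d p.1)) (Fin (d p.1)) ℂ :=
  fun p => if p.2 = k p.1 then X p.1 else 1

/-- `T` is an `S₁ × ⋯ × S_N`-setting source operator for the state `ρ`. -/
def IsSourceOp (d S : Fin N → ℕ) (ρ : Matrix (∀ n, Fin (d n)) (∀ n, Fin (d n)) ℂ)
    (T : Matrix (∀ p : Σ n : Fin N, Fin (S n), Fin (d p.1))
          (∀ p : Σ n : Fin N, Fin (S n), Fin (d p.1)) ℂ) : Prop :=
  T.IsHermitian ∧
    ∀ (X : ∀ n, Matrix (Fin (d n)) (Fin (d n)) ℂ) (k : ∀ n, Fin (S n)),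
      (T * tprod (slot X k)).trace = (ρ * tprod X).trace

end LqHV

namespace LqHV

lemma tprod_mul {ι : Type} [Fintype ι] [DecidableEq ι] {κ : ι → Type} [∀ i, Fintype (κ i)]
    (A B : ∀ i, Matrix (κ i) (κ i) ℂ) : tprod A * tprod B = tprod (fun i => A i * B i) := by
  ext a b
  simp only [tprod, Matrix.mul_apply, ← Finset.prod_mul_distrib]
  rw [Fintype.prod_sum]

lemma trace_tprod {ι : Type} [Fintype ι] [DecidableEq ι] {κ : ι → Type} [∀ i, Fintype (κ i)]
    (A : ∀ i, Matrix (κ i) (κ i) ℂ) : (tprod A).trace = ∏ i, (A i).trace := by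
  simp only [tprod, Matrix.trace, Matrix.diag]
  rw [Fintype.prod_sum]

open scoped MatrixOrder in
lemma tprod_posSemidef {ι : Type} [Fintype ι] [DecidableEq ι] {κ : ι → Type}
    [∀ i, Fintype (κ i)] [∀ i, DecidableEq (κ i)]
    (A : ∀ i, Matrix (κ i) (κ i) ℂ) (h : ∀ i, (A i).PosSemidef) : (tprod A).PosSemidef := by
  have h2 : ∀ i, ∃ B : Matrix (κ i) (κ i) ℂ, A i = Bᴴ * B := fun i => by
    exact CStarAlgebra.nonneg_iff_eq_star_mul_self.mp (h i).nonneg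
  choose B hB using h2
  have : tprod A = (tprod B)ᴴ * tprod B := by
    have e : (tprod B)ᴴ = tprod (fun i => (B i)ᴴ) := by
      ext a b
      simp [tprod, Matrix.conjTranspose_apply]
    rw [e, tprod_mul]
    congr 1
    funext i
    exact hB i
  rw [this]
  exact Matrix.posSemidef_conjTranspose_mul_self _

end LqHV

open LqHV in
/-- For a separable state `ρ = ∑ i, α i • (ρ₁⁽ⁱ⁾ ⊗ ⋯ ⊗ ρ_N⁽ⁱ⁾)` on `ℂ^{d₁} ⊗ ⋯ ⊗ ℂ^{d_N}`,
the operator `∑ i, α i • ((ρ₁⁽ⁱ⁾)^{⊗S₁} ⊗ ⋯ ⊗ (ρ_N⁽ⁱ⁾)^{⊗S_N})` is a positive semidefinite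
`S₁ × ⋯ × S_N`-setting source operator for `ρ`, for all `S₁, …, S_N ≥ 1`. -/
theorem separable_state_posSemidef_source_operator {N K : ℕ} (d S : Fin N → ℕ)
    (hS : ∀ n, 1 ≤ S n) (α : Fin K → ℝ) (hα : ∀ i, 0 < α i) (hα1 : ∑ i, α i = 1)
    (ρs : Fin K → ∀ n, Matrix (Fin (d n)) (Fin (d n)) ℂ)
    (hρs : ∀ i n, (ρs i n).PosSemidef) (hρstr : ∀ i n, (ρs i n).trace = 1) :
    ((∑ i, (α i : ℂ) • tprod (fun p : Σ n : Fin N, Fin (S n) => ρs i p.1)).PosSemidef) ∧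
      IsSourceOp d S (∑ i, (α i : ℂ) • tprod (fun n => ρs i n))
        (∑ i, (α i : ℂ) • tprod (fun p : Σ n : Fin N, Fin (S n) => ρs i p.1)) := by
  have hP : (∑ i, (α i : ℂ) •
      tprod (fun p : Σ n : Fin N, Fin (S n) => ρs i p.1)).PosSemidef := by
    refine Matrix.posSemidef_sum _ fun i _ => ?_
    refine (tprod_posSemidef _ fun p => hρs i p.1).smul ?_
    exact_mod_cast (hα i).le
  refine ⟨hP, hP.isHermitian, fun X k => ?_⟩
  simp only [Finset.sum_mul, Matrix.trace_sum, Matrix.smul_mul, Matrix.trace_smul, tprod_mul,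
    trace_tprod]
  refine Finset.sum_congr rfl fun i _ => ?_
  congr 1
  rw [Fintype.prod_sigma]
  refine Finset.prod_congr rfl fun n _ => ?_
  rw [Finset.prod_eq_single (k n)]
  · simp [slot]
  · intro j _ hj
    simp [slot, hj, hρstr]
  · simp
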